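/- arXiv:1505.02372 — 2 statements merged into one kernel-verified Lean document; each statement's English description precedes it below -/
import Mathlib

section
/- Let ψ be any growing function and let φ be any growing function satisfying φ(n) ≤ n/(log₂ n + log₂ ψ(n)) for all sufficiently large n. Then there exists a sequence q₀(n) with q₀(n) ~ n·2^{n−⌈n/φ(n)⌉} such that L(n, q₀(n)) ≲ 2^n as n → ∞. -/
open Filter

namespace Rev

/-- A reversible gate `TOF(I; t)` on `N` lines: a control set `I` with `|I| ≤ 2`
and a target `t ∉ I`.  `|I| = 0, 1, 2` correspond to NOT, CNOT, C²NOT. -/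
structure Gate (N : ℕ) where
  I : Finset (Fin N)
  t : Fin N
  card_le : I.card ≤ 2
  t_not_mem : t ∉ I

/-- The transformation computed by a gate: the target coordinate is XORed with the
conjunction of the control coordinates (the empty conjunction is `1`). -/
def Gate.apply {N : ℕ} (g : Gate N) (x : Fin N → Bool) : Fin N → Bool :=
  fun j => if j = g.t then xor (x g.t) (decide (∀ i ∈ g.I, x i = true)) else x j

/-- A reversible circuit: a finite sequence (composition) of gates. -/
abbrev Circuit (N : ℕ) := List (Gate N)

/-- The transformation computed by a circuit (composition of the gate maps). -/
def Circuit.eval {N : ℕ} (S : Circuit N) (x : Fin N → Bool) : Fin N → Bool :=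
  S.foldl (fun v g => g.apply v) x

/-- Gate complexity: the number of gates. -/
def Circuit.L {N : ℕ} (S : Circuit N) : ℕ := S.length

/-- The number of NOT and CNOT gates. -/
def Circuit.LC {N : ℕ} (S : Circuit N) : ℕ := (S.filter fun g => g.I.card ≤ 1).length

/-- The number of C²NOT (Toffoli) gates. -/
def Circuit.LT {N : ℕ} (S : Circuit N) : ℕ := (S.filter fun g => g.I.card = 2).length

/-- The quantum weight, given weights `WC` for NOT/CNOT gates and `WT` for C²NOT gates. -/
noncomputable def Circuit.W {N : ℕ} (WC WT : ℝ) (S : Circuit N) : ℝ :=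
  WC * S.LC + WT * S.LT

/-- A circuit has depth one if the sets `{t} ∪ I` of its gates are pairwise disjoint. -/
def DepthOne {N : ℕ} (S : Circuit N) : Prop :=
  S.Pairwise fun g₁ g₂ => Disjoint (insert g₁.t g₁.I) (insert g₂.t g₂.I)

/-- The depth of a circuit: the minimal number of depth-one sub-circuits whose
concatenation is the circuit. -/
noncomputable def Circuit.D {N : ℕ} (S : Circuit N) : ℕ :=
  sInf {d | ∃ parts : List (Circuit N),
    parts.length = d ∧ parts.flatten = S ∧ ∀ p ∈ parts, DepthOne p}

/-- Padding an input vector with zero values on `q` additional inputs. -/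
def pad {n q : ℕ} (x : Fin n → Bool) : Fin (n + q) → Bool :=
  fun i => if h : (i : ℕ) < n then x ⟨i, h⟩ else false

/-- A circuit `S` with `n + q` inputs implements `f : 𝔹ⁿ → 𝔹ᵐ` with `q` additional
inputs: there is a permutation `π` of the output positions such that for every `x`,
applying `S` to `⟨x, 0, …, 0⟩` and permuting the coordinates by `π` yields a vector
whose first `m` coordinates equal `f x`. -/
def Implements {n q m : ℕ} (S : Circuit (n + q)) (f : (Fin n → Bool) → Fin m → Bool) :
    Prop :=
  m ≤ n + q ∧ ∃ π : Equiv.Perm (Fin (n + q)), ∀ x : Fin n → Bool, ∀ j : Fin m,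
    ∀ hj : (j : ℕ) < n + q, Circuit.eval S (pad x) (π ⟨j, hj⟩) = f x j

/-- `f ∈ F(n, q)`: `f : 𝔹ⁿ → 𝔹ⁿ` is implementable with `q` additional inputs. -/
def Implementable (n q : ℕ) (f : (Fin n → Bool) → Fin n → Bool) : Prop :=
  ∃ S : Circuit (n + q), Implements S f

/-- `L(f, q)`: minimal gate complexity of a circuit implementing `f` with `q`
additional inputs. -/
noncomputable def Lmin (n q : ℕ) (f : (Fin n → Bool) → Fin n → Bool) : ℕ :=
  sInf {l | ∃ S : Circuit (n + q), Implements S f ∧ S.L = l}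

/-- The Shannon gate complexity function `L(n, q)`. -/
noncomputable def Lsh (n q : ℕ) : ℕ :=
  sSup {l | ∃ f, Implementable n q f ∧ Lmin n q f = l}

/-- `D(f, q)`: minimal depth of a circuit implementing `f` with `q` additional inputs. -/
noncomputable def Dmin (n q : ℕ) (f : (Fin n → Bool) → Fin n → Bool) : ℕ :=
  sInf {d | ∃ S : Circuit (n + q), Implements S f ∧ S.D = d}

/-- The Shannon depth function `D(n, q)`. -/
noncomputable def Dsh (n q : ℕ) : ℕ :=
  sSup {d | ∃ f, Implementable n q f ∧ Dmin n q f = d}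

/-- `W(f, q)`: minimal quantum weight of a circuit implementing `f` with `q`
additional inputs. -/
noncomputable def Wmin (WC WT : ℝ) (n q : ℕ) (f : (Fin n → Bool) → Fin n → Bool) : ℝ :=
  sInf {w | ∃ S : Circuit (n + q), Implements S f ∧ Circuit.W WC WT S = w}

/-- The Shannon quantum weight function `W(n, q)`. -/
noncomputable def Wsh (WC WT : ℝ) (n q : ℕ) : ℝ :=
  sSup {w | ∃ f, Implementable n q f ∧ Wmin WC WT n q f = w}

/-- `a ~ b`: `a n / b n → 1`. -/
def AsympEquiv (a b : ℕ → ℝ) : Prop :=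
  Tendsto (fun n => a n / b n) atTop (nhds 1)

/-- `a ≲ b`: `limsup (a n / b n) ≤ 1`. -/
def AsympLE (a b : ℕ → ℝ) : Prop :=
  Filter.limsup (fun n => a n / b n) atTop ≤ 1

/-- A growing function: nondecreasing and tending to `+∞`. -/
def Growing (φ : ℕ → ℝ) : Prop :=
  Monotone φ ∧ Tendsto φ atTop atTop

/-- `2 ^ (n - ⌈n / φ(n)⌉)` as a real number. -/
noncomputable def pow2e (φ : ℕ → ℝ) (n : ℕ) : ℝ :=
  (2 : ℝ) ^ ((n : ℤ) - ⌈(n : ℝ) / φ n⌉)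

end Rev

/-!
Regard a line of a circuit as carrying a function of the input `x`; a gate then adds a product of
at most two of these functions to a third one. This is Lupanov's method for such circuits. Cut the
`2^p` assignments of the first `p` coordinates into `b` blocks of size `s`. The `b 2^s` functions
of these coordinates that vanish outside one block are computed once and kept on work lines. For
every assignment of the other `n - p` coordinates, each output of `f` is a sum of `b` of them,
which costs `b` gates controlled by the indicator of that assignment. The indicator is the last
term of a chain of partial products of literals, and running the chain backwards clears its lines
for reuse.

All outputs together cost about `n b 2^(n-p)` gates, that is `2^n n / s`. With memory `2^(n-k)`,
where `k = o(n)` and `n ≤ 2^k`, the choice `p = 2k` and `s = n - 6k` fits into the memory, makes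
this term `(1 + o(1)) 2^n` and all the others `O(n 2^(n-2k)) = O(2^n / n)`.
-/

namespace Rev

section Reachability

variable {Λ R : Type*} [DecidableEq Λ] [CommRing R]

/-- One reversible gate acting on lines indexed by `Λ` that carry elements of `R`: the product of at
most two control lines is added to a further line. For `R = X → Bool` with its ring structure
(exclusive or, conjunction), the elements of `R` are the functions of the circuit's input that the
lines carry. -/
def GateStep (A B : Λ → R) : Prop :=
  ∃ (I : Finset Λ) (t : Λ), I.card ≤ 2 ∧ t ∉ I ∧ B = Function.update A t (A t + ∏ i ∈ I, A i)

/-- `ReachableIn k A B`: at most `k` gates turn the contents `A` of the lines into `B`. -/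
inductive ReachableIn : ℕ → (Λ → R) → (Λ → R) → Prop
  | refl (k : ℕ) (A : Λ → R) : ReachableIn k A A
  | tail {k : ℕ} {A B C : Λ → R} : ReachableIn k A B → GateStep B C → ReachableIn (k + 1) A C

theorem GateStep.symm [CharP R 2] {A B : Λ → R} (h : GateStep A B) : GateStep B A := by
  obtain ⟨I, t, hI, ht, rfl⟩ := h
  refine ⟨I, t, hI, ht, ?_⟩
  have controls_unchanged :
      ∏ i ∈ I, Function.update A t (A t + ∏ i ∈ I, A i) i = ∏ i ∈ I, A i :=
    Finset.prod_congr rfl fun i hi ↦ Function.update_of_ne (ne_of_mem_of_not_mem hi ht) _ _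
  simp [controls_unchanged, CharTwo.add_cancel_right]

theorem GateStep.reachableIn {A B : Λ → R} (h : GateStep A B) : ReachableIn 1 A B :=
  .tail (.refl 0 A) h

namespace ReachableIn

variable {k k' : ℕ} {A B C : Λ → R}

theorem mono (h : ReachableIn k A B) (hk : k ≤ k') : ReachableIn k' A B := by
  induction h generalizing k' with
  | refl => exact .refl _ _
  | tail _ step ih =>
    obtain ⟨m, rfl⟩ := Nat.exists_eq_add_of_le' (Nat.one_le_of_lt hk)
    exact .tail (ih (by omega)) step

theorem trans (h : ReachableIn k A B) (h' : ReachableIn k' B C) : ReachableIn (k + k') A C := by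
  induction h' with
  | refl => exact h.mono (Nat.le_add_right _ _)
  | tail _ step ih => exact .tail (ih h) step

theorem symm [CharP R 2] (h : ReachableIn k A B) : ReachableIn k B A := by
  induction h with
  | refl => exact .refl _ _
  | @tail k _ _ _ _ step ih => exact (step.symm.reachableIn.trans ih).mono (Nat.add_comm 1 k).le

theorem gate (A : Λ → R) {I : Finset Λ} {t : Λ} (hI : I.card ≤ 2) (ht : t ∉ I) :
    ReachableIn 1 A (Function.update A t (A t + ∏ i ∈ I, A i)) :=
  GateStep.reachableIn ⟨I, t, hI, ht, rfl⟩

theorem accumulate {α : Type*} (F : Finset α) {ctrl : α → Finset Λ} {tgt : α → Λ}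
    (hctrl : ∀ a, (ctrl a).card ≤ 2) (hdisj : ∀ a b, tgt a ∉ ctrl b) (A : Λ → R) :
    ReachableIn F.card A fun l ↦ A l + ∑ a ∈ F with tgt a = l, ∏ i ∈ ctrl a, A i := by
  classical
  induction F using Finset.induction_on with
  | empty => simpa using .refl 0 A
  | insert a F ha ih =>
    rw [Finset.card_insert_of_notMem ha]
    have controls_unchanged : ∀ i ∈ ctrl a,
        A i + ∑ b ∈ F with tgt b = i, ∏ i ∈ ctrl b, A i = A i := by
      intro i hi
      rw [Finset.filter_false_of_mem fun b _ ↦ (ne_of_mem_of_not_mem hi (hdisj b a)).symm,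
        Finset.sum_empty, add_zero]
    convert ih.trans (gate _ (hctrl a) (hdisj a a)) using 1
    rw [Finset.prod_congr rfl controls_unchanged]
    funext l
    by_cases hl : tgt a = l
    · subst hl
      have ha' : a ∉ F.filter (tgt · = tgt a) := fun h ↦ ha (Finset.mem_of_mem_filter a h)
      rw [Function.update_self, Finset.filter_insert, if_pos rfl, Finset.sum_insert ha']
      ring
    · rw [Function.update_of_ne (Ne.symm hl), Finset.filter_insert, if_neg hl]

end ReachableIn

end Reachability

section Chain

variable {R : Type*}

/-- The lines of the circuits below: `n` inputs, `n + 1` ancillas for conjunctions of literals, and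
work lines indexed by `W`. -/
abbrev Line (n : ℕ) (W : Type*) := Fin n ⊕ Fin (n + 1) ⊕ W

/-- The contents of all lines, given those of the inputs, the ancillas and the work lines. -/
def layout {n : ℕ} {W : Type*} (y : Fin n → R) (c : Fin (n + 1) → R) (w : W → R) : Line n W → R :=
  Sum.elim y (Sum.elim c w)

theorem update_layout_chain {n : ℕ} {W : Type*} [DecidableEq W] (y : Fin n → R)
    (c : Fin (n + 1) → R) (w : W → R) (i : Fin (n + 1)) (r : R) :
    Function.update (layout y c w) (.inr (.inl i)) r = layout y (Function.update c i r) w := by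
  simp only [layout, Sum.update_elim_inr, Sum.update_elim_inl]

variable [CommRing R]

/-- `ℓ` is a literal of the variable `y`: the constant `1`, the variable or its negation. -/
def IsLiteral (y ℓ : R) : Prop := ℓ = 1 ∨ ℓ = y ∨ ℓ = 1 + y

theorem ReachableIn.update_mul_literal {Λ : Type*} [DecidableEq Λ] {A : Λ → R} {t a b : Λ} {ℓ : R}
    (hℓ : IsLiteral (A b) ℓ) (ht : A t = 0) (hta : t ≠ a) (htb : t ≠ b) (hab : a ≠ b) :
    ReachableIn 2 A (Function.update A t (A a * ℓ)) := by
  have copy : ReachableIn 1 A (Function.update A t (A a)) := by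
    simpa [ht] using ReachableIn.gate A (I := {a}) (t := t) (by simp) (by simpa using hta)
  have mul_add (B : Λ → R) : ReachableIn 1 B (Function.update B t (B t + B a * B b)) := by
    simpa [Finset.prod_pair hab] using
      ReachableIn.gate B (I := {a, b}) (t := t) Finset.card_le_two (by simp [hta, htb])
  rcases hℓ with rfl | rfl | rfl
  · simpa using copy.mono one_le_two
  · simpa [ht] using (mul_add A).mono one_le_two
  · simpa [hta.symm, htb.symm, mul_one_add] using copy.trans (mul_add _)

/-- The ancillas while the products of the prefixes of `ℓ` are being computed: those up to `m` hold
their product, the later ones are still `0`. -/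
def partialChain {n : ℕ} (ℓ : Fin n → R) (m : Fin (n + 1)) : Fin (n + 1) → R :=
  fun i ↦ if i ≤ m then Fin.partialProd ℓ i else 0

variable {n : ℕ} {W : Type*} {y ℓ : Fin n → R} {w w' : W → R}

theorem partialChain_zero (ℓ : Fin n → R) :
    partialChain ℓ 0 = Function.update (0 : Fin (n + 1) → R) 0 1 := by
  funext i
  rcases eq_or_ne i 0 with rfl | hi
  · simp [partialChain]
  · simp [partialChain, hi]

theorem partialChain_succ (ℓ : Fin n → R) (j : Fin n) :
    partialChain ℓ j.succ = Function.update (partialChain ℓ j.castSucc) j.succ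
      (partialChain ℓ j.castSucc j.castSucc * ℓ j) := by
  funext i
  rcases eq_or_ne i j.succ with rfl | hi
  · simp [partialChain, Fin.partialProd_succ]
  · have le_iff : i ≤ j.succ ↔ i ≤ j.castSucc := by
      simp only [Fin.le_def, Fin.val_succ, Fin.val_castSucc, ne_eq, Fin.ext_iff] at hi ⊢
      omega
    simp [partialChain, hi, le_iff]

theorem partialChain_last (ℓ : Fin n → R) : partialChain ℓ (Fin.last n) = Fin.partialProd ℓ := by
  funext i
  simp [partialChain, Fin.le_last]

theorem partialProd_last {M : Type*} [CommMonoid M] (f : Fin n → M) :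
    Fin.partialProd f (Fin.last n) = ∏ i, f i := by
  simp [Fin.partialProd, List.take_of_length_le, List.prod_ofFn]

variable [DecidableEq W]

theorem reachableIn_partialProd (hℓ : ∀ i, IsLiteral (y i) (ℓ i)) :
    ReachableIn (2 * n + 1) (layout y 0 w) (layout y (Fin.partialProd ℓ) w) := by
  suffices prefixes : ∀ m : Fin (n + 1),
      ReachableIn (2 * m + 1) (layout y 0 w) (layout y (partialChain ℓ m) w) by
    simpa [partialChain_last] using prefixes (Fin.last n)
  intro m
  induction m using Fin.induction with
  | zero =>
    have h := ReachableIn.gate (layout y 0 w) (I := ∅) (t := .inr (.inl 0)) (by simp) (by simp)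
    have first_one : layout y 0 w (.inr (.inl 0)) + ∏ i ∈ ∅, layout y 0 w i = 1 := by simp [layout]
    rwa [first_one, update_layout_chain, ← partialChain_zero ℓ] at h
  | succ j ih =>
    have target_zero : partialChain ℓ j.castSucc j.succ = 0 := by
      simp [partialChain]
    have h := ReachableIn.update_mul_literal (A := layout y (partialChain ℓ j.castSucc) w)
      (t := .inr (.inl j.succ)) (a := .inr (.inl j.castSucc)) (b := .inl j)
      (hℓ j) target_zero (by simp [Fin.ext_iff]) (by simp) (by simp)
    rw [update_layout_chain] at h
    rw [partialChain_succ]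
    exact (ih.trans h).mono (by simp only [Fin.val_castSucc, Fin.val_succ]; omega)

theorem ReachableIn.conj_partialProd [CharP R 2] {k : ℕ} (hℓ : ∀ i, IsLiteral (y i) (ℓ i))
    (h : ReachableIn k (layout y (Fin.partialProd ℓ) w) (layout y (Fin.partialProd ℓ) w')) :
    ReachableIn (4 * n + 2 + k) (layout y 0 w) (layout y 0 w') :=
  (((reachableIn_partialProd hℓ).trans h).trans (reachableIn_partialProd hℓ).symm).mono (by omega)

variable {α : Type*}

theorem reachableIn_accumulate_mul_prod [CharP R 2] (hℓ : ∀ i, IsLiteral (y i) (ℓ i)) (F : Finset α)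
    {ctrl : α → Finset W} {tgt : α → W} (hctrl : ∀ a, (ctrl a).card ≤ 1)
    (hdisj : ∀ a b, tgt a ∉ ctrl b) :
    ReachableIn (4 * n + 2 + F.card) (layout y 0 w) (layout y 0 fun l ↦
      w l + ∑ a ∈ F with tgt a = l, (∏ i, ℓ i) * ∏ i ∈ ctrl a, w i) := by
  let work : W ↪ Line n W := Function.Embedding.inr.trans Function.Embedding.inr
  let product : Line n W := .inr (.inl (Fin.last n))
  have product_notMem (a : α) : product ∉ (ctrl a).map work := by simp [product, work]
  refine ReachableIn.conj_partialProd hℓ ?_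
  convert ReachableIn.accumulate F (ctrl := fun a ↦ insert product ((ctrl a).map work))
    (tgt := fun a ↦ work (tgt a)) (fun a ↦ ?_) (fun a b ↦ ?_)
    (layout y (Fin.partialProd ℓ) w) using 1
  · funext l
    simp only [Finset.prod_insert (product_notMem _), Finset.prod_map]
    rcases l with i | i | l <;> simp [layout, product, work, partialProd_last]
  · simpa [Finset.card_insert_of_notMem (product_notMem a)] using hctrl a
  · simpa [product, work] using hdisj a b

theorem reachableIn_accumulate_sum_mul_prod [CharP R 2] {Z : Type*} (G : Finset Z)
    {ℓ : Z → Fin n → R} (hℓ : ∀ z i, IsLiteral (y i) (ℓ z i))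
    {F : Z → Finset α} {k : ℕ} (hF : ∀ z, (F z).card ≤ k)
    {ctrl : Z → α → Finset W} {tgt : Z → α → W} (hctrl : ∀ z a, (ctrl z a).card ≤ 1)
    (hdisj : ∀ z z' a b, tgt z a ∉ ctrl z' b) :
    ReachableIn (G.card * (4 * n + 2 + k)) (layout y 0 w) (layout y 0 fun l ↦
      w l + ∑ z ∈ G, ∑ a ∈ F z with tgt z a = l, (∏ i, ℓ z i) * ∏ i ∈ ctrl z a, w i) := by
  classical
  induction G using Finset.induction_on with
  | empty => simpa using .refl 0 _
  | insert z G hz ih =>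
    have h := ih.trans
      (reachableIn_accumulate_mul_prod (hℓ z) (F z) (hctrl z) (hdisj z z))
    have controls_unchanged (a : α) : ∀ i ∈ ctrl z a,
        w i + ∑ z' ∈ G, ∑ b ∈ F z' with tgt z' b = i,
          (∏ i, ℓ z' i) * ∏ i ∈ ctrl z' b, w i = w i := by
      intro i hi
      rw [Finset.sum_eq_zero, add_zero]
      intro z' _
      rw [Finset.filter_false_of_mem fun b _ ↦ (ne_of_mem_of_not_mem hi (hdisj z' z b a)).symm,
        Finset.sum_empty]
    simp only [fun a ↦ Finset.prod_congr rfl (controls_unchanged a)] at h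
    simp only [Finset.card_insert_of_notMem hz, Finset.sum_insert hz, add_one_mul]
    convert h.mono (Nat.add_le_add_left (Nat.add_le_add_left (hF z) _) _) using 3
    ring

end Chain

section BooleanFunctions

instance : CharP Bool 2 := CharTwo.of_one_ne_zero_of_two_eq_zero (by decide) (by decide)

theorem bool_prod_eq_decide {Λ : Type*} (I : Finset Λ) (b : Λ → Bool) :
    ∏ i ∈ I, b i = decide (∀ i ∈ I, b i = true) := by
  classical
  induction I using Finset.induction_on with
  | empty => rfl
  | insert a I ha ih =>
    rw [Finset.prod_insert ha, ih, Bool.mul_eq_and]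
    simp [Bool.decide_and]

/-- The contents of the input lines, as functions of the input. -/
def coord (n : ℕ) : Fin n → (Fin n → Bool) → Bool := fun i x ↦ x i

variable {n : ℕ} (P : Fin n → Prop) [DecidablePred P]

/-- The literals whose product is the indicator of the inputs that extend the assignment `z` of the
coordinates in `P`. -/
def assignmentLiteral (z : {i // P i} → Bool) (i : Fin n) : (Fin n → Bool) → Bool :=
  if h : P i then if z ⟨i, h⟩ then coord n i else 1 + coord n i else 1

theorem isLiteral_assignmentLiteral (z : {i // P i} → Bool) (i : Fin n) :
    IsLiteral (coord n i) (assignmentLiteral P z i) := by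
  unfold assignmentLiteral IsLiteral
  split_ifs <;> simp

theorem prod_assignmentLiteral (z : {i // P i} → Bool) (x : Fin n → Bool) :
    (∏ i, assignmentLiteral P z i) x = if Subtype.restrict P x = z then 1 else 0 := by
  have literal_eq_true (i : Fin n) :
      assignmentLiteral P z i x = true ↔ ∀ h : P i, x i = z ⟨i, h⟩ := by
    by_cases h : P i
    · cases hz : z ⟨i, h⟩ <;> simp [assignmentLiteral, h, hz, coord, ← Bool.one_eq_true,
        Bool.zero_eq_false]
    · simp [assignmentLiteral, h, Bool.one_eq_true]
  rw [Finset.prod_apply, bool_prod_eq_decide]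
  simp [literal_eq_true, funext_iff, Subtype.restrict, Bool.one_eq_true, Bool.zero_eq_false]

theorem reachableIn_accumulate_restrict {W α : Type*} [DecidableEq W] {k : ℕ}
    {F : ({i // P i} → Bool) → Finset α} (hF : ∀ z, (F z).card ≤ k)
    {ctrl : ({i // P i} → Bool) → α → Finset W} {tgt : ({i // P i} → Bool) → α → W}
    (hctrl : ∀ z a, (ctrl z a).card ≤ 1) (hdisj : ∀ z z' a b, tgt z a ∉ ctrl z' b)
    (w : W → (Fin n → Bool) → Bool) :
    ReachableIn (Fintype.card ({i // P i} → Bool) * (4 * n + 2 + k)) (layout (coord n) 0 w)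
      (layout (coord n) 0 fun l x ↦ w l x + ∑ a ∈ F (Subtype.restrict P x) with
        tgt (Subtype.restrict P x) a = l, ∏ i ∈ ctrl (Subtype.restrict P x) a, w i x) := by
  rw [← Finset.card_univ]
  convert reachableIn_accumulate_sum_mul_prod (w := w) Finset.univ
    (isLiteral_assignmentLiteral P) hF hctrl hdisj using 2
  funext l x
  simp only [← Finset.mul_sum, Pi.add_apply, Finset.sum_apply, Pi.mul_apply,
    prod_assignmentLiteral]
  simp [Finset.prod_apply]

variable {H O : Type*} [DecidableEq H] [DecidableEq O]

theorem reachableIn_comp_restrict [Fintype H] (u : H → ({i // P i} → Bool) → Bool)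
    (o : O → (Fin n → Bool) → Bool) :
    ReachableIn (Fintype.card ({i // P i} → Bool) * (4 * n + 2 + Fintype.card H))
      (layout (coord n) 0 (Sum.elim (fun _ : H ↦ 0) o))
      (layout (coord n) 0 (Sum.elim (fun a ↦ u a ∘ Subtype.restrict P) o)) := by
  convert reachableIn_accumulate_restrict P (F := fun z ↦ {a | u a z = true})
    (fun _ ↦ Finset.card_le_univ _) (ctrl := fun _ _ ↦ ∅) (tgt := fun _ ↦ Sum.inl)
    (by simp) (by simp) (Sum.elim (fun _ : H ↦ 0) o) using 2
  funext l x
  rcases l with a | i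
  · simp only [Sum.elim_inl, Sum.inl.injEq, Finset.prod_empty, Finset.sum_filter,
      Finset.sum_ite_eq', Finset.mem_filter_univ]
    cases h : u a (Subtype.restrict P x) <;> simp [h, Bool.one_eq_true, Bool.zero_eq_false]
  · simp

theorem reachableIn_add_sum_restrict {J : Type*} [Fintype J] [Fintype O]
    (h : H → (Fin n → Bool) → Bool) (o : O → (Fin n → Bool) → Bool)
    (M : O → ({i // P i} → Bool) → J → H) :
    ReachableIn
      (Fintype.card ({i // P i} → Bool) * (4 * n + 2 + Fintype.card O * Fintype.card J))
      (layout (coord n) 0 (Sum.elim h o))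
      (layout (coord n) 0 (Sum.elim h fun i x ↦
        o i x + ∑ j, h (M i (Subtype.restrict P x) j) x)) := by
  convert reachableIn_accumulate_restrict P (F := fun _ ↦ (Finset.univ : Finset (O × J)))
    (fun _ ↦ (Finset.card_univ.trans (Fintype.card_prod O J)).le)
    (ctrl := fun z a ↦ {Sum.inl (M a.1 z a.2)}) (tgt := fun _ a ↦ Sum.inr a.1)
    (by simp) (by simp) (Sum.elim h o) using 2
  funext l x
  rcases l with a | i
  · simp
  · simp [Finset.sum_filter, Fintype.sum_prod_type]

end BooleanFunctions

section Lupanov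

variable {Z J S : Type*} [DecidableEq J]

/-- Lupanov's block functions: `κ` cuts `Z` into blocks indexed by `J`, with positions in `S` inside
a block; the function for the block `j` and the word `v` is `v` on that block and `0` elsewhere. -/
def blockFunction (κ : Z ↪ J × S) (a : J × (S → Bool)) (z : Z) : Bool :=
  if (κ z).1 = a.1 then a.2 (κ z).2 else 0

theorem exists_sum_blockFunction_eq [Fintype J] (κ : Z ↪ J × S) (g : Z → Bool) :
    ∃ M : J → J × (S → Bool), ∀ z, ∑ j, blockFunction κ (M j) z = g z :=
  ⟨fun j ↦ (j, fun r ↦ Function.extend κ g 0 (j, r)), fun z ↦ by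
    simp [blockFunction, κ.injective.extend_apply]⟩

theorem exists_sum_blockFunction_restrict_eq [Fintype J] {ι O : Type*} (P : ι → Prop)
    (κ : ({i // P i} → Bool) ↪ J × S) (f : (ι → Bool) → O → Bool) :
    ∃ M : O → ({i // ¬P i} → Bool) → J → J × (S → Bool), ∀ i x,
      ∑ j, blockFunction κ (M i (Subtype.restrict (¬P ·) x) j) (Subtype.restrict P x) = f x i := by
  classical
  let split := Equiv.piEquivPiSubtypeProd P fun _ ↦ Bool
  choose M hM using fun i y ↦ exists_sum_blockFunction_eq κ fun z ↦ f (split.symm (z, y)) i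
  refine ⟨M, fun i x ↦ (hM _ _ _).trans ?_⟩
  exact congrArg (f · i) (split.symm_apply_apply x)

end Lupanov

section Circuits

theorem ReachableIn.exists_circuit {Λ X : Type*} [DecidableEq Λ] {N k : ℕ} {A B : Λ → X → Bool}
    (h : ReachableIn k A B) (ι : Λ ↪ Fin N) :
    ∃ S : Circuit N, S.L ≤ k ∧
      ∀ x v, (∀ l, v (ι l) = A l x) → ∀ l, Circuit.eval S v (ι l) = B l x := by
  induction h with
  | refl k A => exact ⟨[], Nat.zero_le k, fun x v hv ↦ hv⟩
  | tail _ step ih =>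
    obtain ⟨S, hS, hSv⟩ := ih
    obtain ⟨I, t, hI, ht, rfl⟩ := step
    refine ⟨S ++ [⟨I.map ι, ι t, by simpa using hI, by simpa using ht⟩],
      by simpa [Circuit.L] using hS, fun x v hv l ↦ ?_⟩
    have hS := hSv x v hv
    simp only [Circuit.eval] at hS
    simp only [Circuit.eval, List.foldl_append, List.foldl_cons, List.foldl_nil, Gate.apply,
      ι.injective.eq_iff, hS, Finset.forall_mem_map]
    rcases eq_or_ne l t with rfl | hl
    · simp [bool_prod_eq_decide, Bool.add_eq_xor]
    · simp [hl]

theorem exists_perm_apply_castLE {m N : ℕ} (hm : m ≤ N) (out : Fin m ↪ Fin N) :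
    ∃ π : Equiv.Perm (Fin N), ∀ j, π (Fin.castLE hm j) = out j := by
  have := Equiv.Perm.isMultiplyPretransitive (Fin N) m
  obtain ⟨π, hπ⟩ := MulAction.exists_smul_eq (Equiv.Perm (Fin N)) (Fin.castLEEmb hm) out
  exact ⟨π, fun j ↦ DFunLike.congr_fun hπ j⟩

variable {n m q : ℕ}

theorem ReachableIn.exists_implements {V : Type*} [DecidableEq V] [Fintype V] {k : ℕ}
    {B : Fin n ⊕ V → (Fin n → Bool) → Bool} (h : ReachableIn k (Sum.elim (coord n) 0) B)
    (hV : Fintype.card V ≤ q) (out : Fin m ↪ Fin n ⊕ V) {f : (Fin n → Bool) → Fin m → Bool}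
    (hf : ∀ x j, B (out j) x = f x j) :
    ∃ S : Circuit (n + q), Implements S f ∧ S.L ≤ k := by
  obtain ⟨ancilla⟩ : Nonempty (V ↪ Fin q) :=
    Function.Embedding.nonempty_of_card_le (by simpa using hV)
  let ι : Fin n ⊕ V ↪ Fin (n + q) :=
    ((Function.Embedding.refl _).sumMap ancilla).trans finSumFinEquiv.toEmbedding
  have hm : m ≤ n + q := by simpa using Fintype.card_le_of_embedding (out.trans ι)
  obtain ⟨S, hS, hSv⟩ := h.exists_circuit ι
  obtain ⟨π, hπ⟩ := exists_perm_apply_castLE hm (out.trans ι)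
  have pad_eq (x : Fin n → Bool) : ∀ l, pad x (ι l) = Sum.elim (coord n) 0 l x := by
    rintro (i | v) <;> simp [ι, pad, coord, Bool.zero_eq_false]
  refine ⟨S, ⟨hm, π, fun x j _ ↦ ?_⟩, hS⟩
  calc Circuit.eval S (pad x) (π (Fin.castLE hm j))
      = Circuit.eval S (pad x) (ι (out j)) := by rw [hπ]; rfl
    _ = f x j := (hSv x _ (pad_eq x) _).trans (hf x j)

theorem exists_implements_of_blocks {J S : Type*} [Fintype J] [Fintype S]
    [DecidableEq S] (P : Fin n → Prop) [DecidablePred P] (κ : ({i // P i} → Bool) ↪ J × S)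
    (hq : (n + 1) + (Fintype.card (J × (S → Bool)) + m) ≤ q)
    (f : (Fin n → Bool) → Fin m → Bool) :
    ∃ C : Circuit (n + q), Implements C f ∧ C.L ≤
      Fintype.card ({i // P i} → Bool) * (4 * n + 2 + Fintype.card (J × (S → Bool))) +
      Fintype.card ({i // ¬P i} → Bool) * (4 * n + 2 + m * Fintype.card J) := by
  classical
  obtain ⟨M, hM⟩ := exists_sum_blockFunction_restrict_eq P κ f
  have blocks := reachableIn_comp_restrict P (blockFunction κ) (O := Fin m) 0
  have outputs := reachableIn_add_sum_restrict (¬P ·)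
    (fun a ↦ blockFunction κ a ∘ Subtype.restrict P) 0 M
  have reach := blocks.trans outputs
  have initial_eq : layout (coord n) 0 (Sum.elim (fun _ : J × (S → Bool) ↦ 0) (0 : Fin m → _)) =
      Sum.elim (coord n) 0 := by
    funext l
    rcases l with i | i | a | i <;> rfl
  rw [initial_eq, Fintype.card_fin] at reach
  refine reach.exists_implements (by simpa using hq)
    (Function.Embedding.inr.trans (Function.Embedding.inr.trans Function.Embedding.inr))
    fun x j ↦ ?_
  simpa [layout] using hM j x

theorem exists_implements_L_le {p s b : ℕ} (hp : p ≤ n) (hb : 2 ^ p ≤ b * s)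
    (hq : (n + 1) + (b * 2 ^ s + m) ≤ q) (f : (Fin n → Bool) → Fin m → Bool) :
    ∃ C : Circuit (n + q), Implements C f ∧ C.L ≤
      2 ^ p * (4 * n + 2 + b * 2 ^ s) + 2 ^ (n - p) * (4 * n + 2 + m * b) := by
  have card_low : Fintype.card {i : Fin n // (i : ℕ) < p} = p := by
    simp [Fintype.card_subtype, Fin.card_filter_val_lt, hp]
  have card_high : Fintype.card {i : Fin n // ¬(i : ℕ) < p} = n - p := by
    rw [Fintype.card_subtype_compl, card_low, Fintype.card_fin]
  obtain ⟨κ⟩ : Nonempty (({i : Fin n // (i : ℕ) < p} → Bool) ↪ Fin b × Fin s) :=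
    Function.Embedding.nonempty_of_card_le (by simpa [card_low] using hb)
  simpa only [Fintype.card_fun, Fintype.card_bool, card_low, card_high, Fintype.card_prod,
    Fintype.card_fin] using exists_implements_of_blocks _ κ (by simpa using hq) f

theorem Lsh_le {p s b : ℕ} (hp : p ≤ n) (hb : 2 ^ p ≤ b * s)
    (hq : (n + 1) + (b * 2 ^ s + n) ≤ q) :
    Lsh n q ≤ 2 ^ p * (4 * n + 2 + b * 2 ^ s) + 2 ^ (n - p) * (4 * n + 2 + n * b) := by
  apply csSup_le'
  rintro _ ⟨f, -, rfl⟩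
  obtain ⟨C, hCf, hC⟩ := exists_implements_L_le hp hb hq f
  have Lmin_le : Lmin n q f ≤ C.L := Nat.sInf_le ⟨C, hCf, rfl⟩
  exact Lmin_le.trans hC

end Circuits

section Parameters

variable {n s k q : ℕ}

theorem two_pow_div_add_one_le_two_pow_succ (m s : ℕ) : 2 ^ m / s + 1 ≤ 2 ^ (m + 1) := by
  have div_le : 2 ^ m / s ≤ 2 ^ m := Nat.div_le_self _ _
  have one_le : 1 ≤ 2 ^ m := Nat.one_le_two_pow
  rw [pow_succ]
  omega

theorem lines_le_two_pow (hs : n = s + 6 * k) (hk : 0 < k) (hks : k ≤ s) (hn : n ≤ 2 ^ k) :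
    (n + 1) + ((2 ^ (2 * k) / s + 1) * 2 ^ s + n) ≤ 2 ^ (n - k) := by
  have blocks_le : (2 ^ (2 * k) / s + 1) * 2 ^ s ≤ 2 ^ (n - k - 1) := calc
    (2 ^ (2 * k) / s + 1) * 2 ^ s ≤ 2 ^ (2 * k + 1) * 2 ^ s :=
      Nat.mul_le_mul_right _ (two_pow_div_add_one_le_two_pow_succ _ _)
    _ = 2 ^ (2 * k + 1 + s) := (pow_add _ _ _).symm
    _ ≤ 2 ^ (n - k - 1) := Nat.pow_le_pow_right two_pos (by omega)
  have lines_le : 2 * n + 1 ≤ 2 ^ (n - k - 1) := calc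
    2 * n + 1 ≤ 2 ^ k * 2 ^ 2 := by omega
    _ = 2 ^ (k + 2) := (pow_add _ _ _).symm
    _ ≤ 2 ^ (n - k - 1) := Nat.pow_le_pow_right two_pos (by omega)
  have two_mul_half : 2 ^ (n - k) = 2 * 2 ^ (n - k - 1) := by
    rw [← pow_succ']
    congr 1
    omega
  omega

theorem gates_le (hs : n = s + 6 * k) (hspos : 0 < s) :
    ((2 ^ (2 * k) * (4 * n + 2 + (2 ^ (2 * k) / s + 1) * 2 ^ s) +
      2 ^ (n - 2 * k) * (4 * n + 2 + n * (2 ^ (2 * k) / s + 1)) : ℕ) : ℝ) ≤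
    (9 * n + 6) * 2 ^ (n - 2 * k) + n / s * 2 ^ n := by
  have prefixes_le : 2 ^ (2 * k) ≤ 2 ^ (n - 2 * k) := Nat.pow_le_pow_right two_pos (by omega)
  have blocks_le : 2 ^ (2 * k) * ((2 ^ (2 * k) / s + 1) * 2 ^ s) ≤ 2 * 2 ^ (n - 2 * k) := calc
    2 ^ (2 * k) * ((2 ^ (2 * k) / s + 1) * 2 ^ s)
      ≤ 2 ^ (2 * k) * (2 ^ (2 * k + 1) * 2 ^ s) := by
        gcongr
        exact two_pow_div_add_one_le_two_pow_succ _ _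
    _ = 2 * 2 ^ (n - 2 * k) := by
        rw [← pow_add, ← pow_add, ← pow_succ']
        congr 1
        omega
  have main_le : ((2 ^ (n - 2 * k) * (n * (2 ^ (2 * k) / s)) : ℕ) : ℝ) ≤ n / s * 2 ^ n := calc
    ((2 ^ (n - 2 * k) * (n * (2 ^ (2 * k) / s)) : ℕ) : ℝ)
      ≤ 2 ^ (n - 2 * k) * (n * (2 ^ (2 * k) / s)) := by
        push_cast
        gcongr
        exact_mod_cast Nat.cast_div_le (α := ℝ) (m := 2 ^ (2 * k)) (n := s)
    _ = n / s * (2 ^ (n - 2 * k) * 2 ^ (2 * k)) := by ring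
    _ = n / s * 2 ^ n := by rw [pow_sub_mul_pow _ (by omega)]
  have lower_order : 2 ^ (2 * k) * (4 * n + 2 + (2 ^ (2 * k) / s + 1) * 2 ^ s) +
      2 ^ (n - 2 * k) * (4 * n + 2 + n * (2 ^ (2 * k) / s + 1)) ≤
      (9 * n + 6) * 2 ^ (n - 2 * k) + 2 ^ (n - 2 * k) * (n * (2 ^ (2 * k) / s)) := by
    nlinarith [Nat.mul_le_mul_right (4 * n + 2) prefixes_le]
  refine (Nat.cast_le.2 lower_order).trans ?_
  rw [Nat.cast_add]
  exact add_le_add (by simp) main_le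

theorem Lsh_div_two_pow_le (hk : 0 < k) (hkn : 7 * k ≤ n) (hn : n ≤ 2 ^ k)
    (hq : 2 ^ (n - k) ≤ q) :
    (Lsh n q : ℝ) / 2 ^ n ≤ (9 * n + 6) / n ^ 2 + n / (n - 6 * k) := by
  obtain ⟨s, hs⟩ := Nat.exists_eq_add_of_le' (show 6 * k ≤ n by omega)
  have two_pow_le : 2 ^ (2 * k) ≤ (2 ^ (2 * k) / s + 1) * s :=
    (Nat.lt_div_mul_add (by omega)).le.trans_eq (add_one_mul _ _).symm
  have Lsh_bound : (Lsh n q : ℝ) ≤ (9 * n + 6) * 2 ^ (n - 2 * k) + n / s * 2 ^ n :=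
    (Nat.cast_le.2 (Lsh_le (by omega) two_pow_le
      ((lines_le_two_pow hs hk (by omega) hn).trans hq))).trans (gates_le hs (by omega))
  have sq_le : (n : ℝ) ^ 2 ≤ 2 ^ (2 * k) := by
    rw [mul_comm, pow_mul]
    gcongr
    exact_mod_cast hn
  have n_pos : (0 : ℝ) < n := by
    exact_mod_cast (by omega : 0 < n)
  have s_eq : (n : ℝ) - 6 * k = s := by
    rw [hs]
    push_cast
    ring
  calc (Lsh n q : ℝ) / 2 ^ n
      ≤ ((9 * n + 6) * 2 ^ (n - 2 * k) + n / s * 2 ^ n) / 2 ^ n := by gcongr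
    _ = (9 * n + 6) / 2 ^ (2 * k) + n / s := by
        rw [← pow_sub_mul_pow (2 : ℝ) (show 2 * k ≤ n by omega)]
        field_simp
    _ ≤ (9 * n + 6) / n ^ 2 + n / (n - 6 * k) := by
        rw [s_eq]
        gcongr

end Parameters

section Asymptotics

theorem tendsto_natLog_div_natCast_zero (b : ℕ) :
    Tendsto (fun n : ℕ ↦ (Nat.log b n : ℝ) / n) atTop (nhds 0) := by
  have logb_div : Tendsto (fun n : ℕ ↦ Real.logb b n / n) atTop (nhds 0) := by
    simpa [Real.logb, div_right_comm] using
      ((Real.isLittleO_log_id_atTop.tendsto_div_nhds_zero).comp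
        tendsto_natCast_atTop_atTop).div_const (Real.log b)
  refine squeeze_zero (fun n ↦ by positivity) (fun n ↦ ?_) logb_div
  gcongr
  exact Real.natLog_le_logb n b

theorem eventually_mul_le_of_tendsto_div_zero {k : ℕ → ℕ}
    (hk : Tendsto (fun n ↦ (k n : ℝ) / n) atTop (nhds 0)) {c : ℕ} (hc : 0 < c) :
    ∀ᶠ n in atTop, c * k n ≤ n := by
  have c_pos : (0 : ℝ) < c := Nat.cast_pos.2 hc
  filter_upwards [hk.eventually_le_const (inv_pos.2 c_pos), eventually_gt_atTop 0] with n hle hn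
  have hle : (k n : ℝ) ≤ (c : ℝ)⁻¹ * n := (div_le_iff₀ (Nat.cast_pos.2 hn)).1 hle
  have : (c : ℝ) * k n ≤ n := (le_inv_mul_iff₀ c_pos).1 hle
  exact_mod_cast this

theorem tendsto_Lsh_bound_one {k : ℕ → ℕ}
    (hk : Tendsto (fun n ↦ (k n : ℝ) / n) atTop (nhds 0)) :
    Tendsto (fun n : ℕ ↦ (9 * (n : ℝ) + 6) / n ^ 2 + n / (n - 6 * k n)) atTop (nhds 1) := by
  have inv_lim := tendsto_inv_atTop_nhds_zero_nat (𝕜 := ℝ)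
  have lim : Tendsto (fun n : ℕ ↦ 9 * (n : ℝ)⁻¹ + 6 * ((n : ℝ)⁻¹ * (n : ℝ)⁻¹) +
      (1 - 6 * ((k n : ℝ) / n))⁻¹) atTop (nhds 1) := by
    convert ((inv_lim.const_mul 9).add ((inv_lim.mul inv_lim).const_mul 6)).add
      (((tendsto_const_nhds (x := (1 : ℝ))).sub (hk.const_mul 6)).inv₀ (by norm_num)) using 2
    norm_num
  refine lim.congr' ?_
  filter_upwards [eventually_gt_atTop 0] with n hn
  have : (0 : ℝ) < n := Nat.cast_pos.2 hn
  have first : 9 * (n : ℝ)⁻¹ + 6 * ((n : ℝ)⁻¹ * (n : ℝ)⁻¹) = (9 * n + 6) / n ^ 2 := by field_simp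
  have second : 1 - 6 * ((k n : ℝ) / n) = (n - 6 * k n) / n := by field_simp
  rw [first, second, inv_div]

theorem asympLE_of_eventually_div_le {a b c : ℕ → ℝ} (ha : ∀ n, 0 ≤ a n / b n)
    (hac : ∀ᶠ n in atTop, a n / b n ≤ c n) (hc : Tendsto c atTop (nhds 1)) : AsympLE a b := by
  have cobounded : IsCoboundedUnder (· ≤ ·) atTop fun n ↦ a n / b n :=
    (isBoundedUnder_of ⟨0, ha⟩ : IsBoundedUnder (· ≥ ·) atTop _).isCoboundedUnder_le
  exact (limsup_le_limsup hac cobounded hc.isBoundedUnder_le).trans_eq hc.limsup_eq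

theorem asympLE_Lsh {k q : ℕ → ℕ} (hk : Tendsto (fun n ↦ (k n : ℝ) / n) atTop (nhds 0))
    (hq : ∀ᶠ n in atTop, 2 ^ (n - k n) ≤ q n) :
    AsympLE (fun n ↦ (Lsh n (q n) : ℝ)) (fun n ↦ 2 ^ n) := by
  let K (n : ℕ) : ℕ := k n + (Nat.log 2 n + 1)
  have hK : Tendsto (fun n ↦ (K n : ℝ) / n) atTop (nhds 0) := by
    simpa [K, add_div] using
      hk.add ((tendsto_natLog_div_natCast_zero 2).add tendsto_inv_atTop_nhds_zero_nat)
  refine asympLE_of_eventually_div_le (fun n ↦ by positivity) ?_ (tendsto_Lsh_bound_one hK)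
  filter_upwards [hq, eventually_mul_le_of_tendsto_div_zero hK (show 0 < 7 by norm_num)]
    with n hqn hKn
  have le_two_pow : n ≤ 2 ^ K n :=
    (Nat.lt_pow_succ_log_self one_lt_two n).le.trans
      (Nat.pow_le_pow_right two_pos (Nat.le_add_left _ _))
  have memory_le : 2 ^ (n - K n) ≤ 2 ^ (n - k n) :=
    Nat.pow_le_pow_right two_pos (Nat.sub_le_sub_left (Nat.le_add_right _ _) n)
  exact Lsh_div_two_pow_le (by simp [K]) hKn le_two_pow (memory_le.trans hqn)

variable {φ : ℕ → ℝ}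

theorem tendsto_natCeil_div_div_natCast_zero (hφ : Tendsto φ atTop atTop) :
    Tendsto (fun n : ℕ ↦ (⌈(n : ℝ) / φ n⌉₊ : ℝ) / n) atTop (nhds 0) := by
  have upper : Tendsto (fun n : ℕ ↦ (φ n)⁻¹ + (n : ℝ)⁻¹) atTop (nhds 0) := by
    simpa using (tendsto_inv_atTop_zero.comp hφ).add tendsto_inv_atTop_nhds_zero_nat
  refine squeeze_zero' (.of_forall fun n ↦ by positivity) ?_ upper
  filter_upwards [hφ.eventually_gt_atTop 0, eventually_gt_atTop 0] with n φ_pos hn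
  have : (0 : ℝ) < n := Nat.cast_pos.2 hn
  calc (⌈(n : ℝ) / φ n⌉₊ : ℝ) / n ≤ (n / φ n + 1) / n := by
        gcongr
        exact (Nat.ceil_lt_add_one (by positivity)).le
    _ = (φ n)⁻¹ + (n : ℝ)⁻¹ := by field_simp

theorem eventually_pow2e_eq (hφ : Tendsto φ atTop atTop) :
    ∀ᶠ n in atTop, pow2e φ n = 2 ^ (n - ⌈(n : ℝ) / φ n⌉₊) := by
  filter_upwards [hφ.eventually_ge_atTop 1] with n one_le
  have ceil_le : ⌈(n : ℝ) / φ n⌉₊ ≤ n := Nat.ceil_le.2 (div_le_self (Nat.cast_nonneg n) one_le)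
  rw [pow2e, ← Int.natCast_ceil_eq_ceil (by positivity), ← Nat.cast_sub ceil_le, zpow_natCast]

theorem asympEquiv_of_eventuallyEq {a b : ℕ → ℝ} (hab : a =ᶠ[atTop] b)
    (hb : ∀ᶠ n in atTop, b n ≠ 0) : AsympEquiv a b := by
  refine tendsto_const_nhds.congr' ?_
  filter_upwards [hab, hb] with n hn hbn
  rw [hn, div_self hbn]

end Asymptotics

theorem complexity_upper_with_memory_general (φ : ℕ → ℝ) (hφ : Tendsto φ atTop atTop) :
    ∃ q₀ : ℕ → ℕ,
      AsympEquiv (fun n => (q₀ n : ℝ)) (fun n => (n : ℝ) * pow2e φ n) ∧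
      AsympLE (fun n => (Lsh n (q₀ n) : ℝ)) (fun n => (2 : ℝ) ^ n) := by
  refine ⟨fun n ↦ n * 2 ^ (n - ⌈(n : ℝ) / φ n⌉₊), asympEquiv_of_eventuallyEq ?_ ?_,
    asympLE_Lsh (tendsto_natCeil_div_div_natCast_zero hφ) ?_⟩
  · filter_upwards [eventually_pow2e_eq hφ] with n hn
    simp [hn]
  · filter_upwards [eventually_pow2e_eq hφ, eventually_ne_atTop 0] with n hn hn0
    simp [hn, hn0]
  · filter_upwards [eventually_gt_atTop 0] with n hn
    exact Nat.le_mul_of_pos_left _ hn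

/-- For any growing functions `ψ` and `φ` with `φ(n) ≤ n / (log₂ n + log₂ ψ(n))` for
all sufficiently large `n`, there is a sequence `q₀(n) ~ n · 2^{n - ⌈n/φ(n)⌉}` with
`L(n, q₀(n)) ≲ 2ⁿ`. -/
theorem complexity_upper_with_memory (ψ φ : ℕ → ℝ) (hψ : Growing ψ) (hφ : Growing φ)
    (hφψ : ∀ᶠ n in atTop, φ n ≤ (n : ℝ) / (Real.logb 2 n + Real.logb 2 (ψ n))) :
    ∃ q₀ : ℕ → ℕ,
      AsympEquiv (fun n => (q₀ n : ℝ)) (fun n => (n : ℝ) * pow2e φ n) ∧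
      AsympLE (fun n => (Lsh n (q₀ n) : ℝ)) (fun n => (2 : ℝ) ^ n) := by
  exact complexity_upper_with_memory_general φ hφ.2

end Rev
end

section
/- Let ψ be any growing function and let φ be any growing function satisfying φ(n) ≤ n/(log₂ n + log₂ ψ(n)) for all sufficiently large n. Then there exists a sequence q₀(n) with q₀(n) ~ n·2^{n−⌈n/φ(n)⌉} such that L(n, q₀(n)) ≍ 2^n, i.e., there are constants 0 < c ≤ C and N such that c·2^n ≤ L(n, q₀(n)) ≤ C·2^n for all n ≥ N. -/
open Filter

/-!
Upper bound, after Lupanov: split the input into `m` and `n - m` bits and compute all minterms of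
both parts. Cut the `2 ^ m` minterms of the first part into blocks of size `s` and compute the
indicator of every subset of every block. Each output is then an XOR of at most about
`2 ^ (n - m) * (2 ^ m / s)` products of two available values, so all `n` outputs cost
`O((n / s) * 2 ^ n)` gates. Taking `s = n - 2 * m`, the intermediate values fit into
`O(2 ^ (n - m))` lines. With `m = ⌈n / r⌉` for a constant `2 < r ≤ φ n`, the block size `s` is
proportional to `n` and this memory is at most `n * 2 ^ (n - ⌈n / φ n⌉)`.

Lower bound, by counting: specifying `f` takes `n * 2 ^ n` bits, whereas a gate on `2 ^ O(n)` lines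
carries only `O(n)` bits.
-/

namespace Rev

variable {N : ℕ} {X ι κ : Type*}

section Evaluation

theorem Circuit.eval_cons (g : Gate N) (S : Circuit N) (v : Fin N → Bool) :
    Circuit.eval (g :: S) v = S.eval (g.apply v) := rfl

theorem Circuit.eval_append (S T : Circuit N) (v : Fin N → Bool) :
    Circuit.eval (S ++ T) v = T.eval (S.eval v) :=
  List.foldl_append

theorem prod_bool_eq_decide (I : Finset ι) (v : ι → Bool) :
    ∏ i ∈ I, v i = decide (∀ i ∈ I, v i = true) := by
  classical
  induction I using Finset.induction_on with
  | empty => simp [Bool.one_eq_true]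
  | insert a I ha ih => simp [Finset.prod_insert ha, ih, Bool.mul_eq_and]

theorem prod_bool_pair [DecidableEq ι] (v : ι → Bool) (i j : ι) :
    ∏ a ∈ {i, j}, v a = v i * v j := by
  simp [prod_bool_eq_decide, Bool.mul_eq_and]

theorem Gate.apply_eq_update (g : Gate N) (v : Fin N → Bool) :
    g.apply v = Function.update v g.t (v g.t + ∏ i ∈ g.I, v i) := by
  funext j
  by_cases hj : j = g.t
  · subst hj
    simp [Gate.apply, prod_bool_eq_decide, Bool.add_eq_xor]
  · simp [Gate.apply, hj]

theorem exists_circuit_eval_eq_update (t : Fin N) (T : List (Finset (Fin N)))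
    (hT : ∀ I ∈ T, I.card ≤ 2 ∧ t ∉ I) :
    ∃ S : Circuit N, S.length = T.length ∧
      ∀ v, S.eval v = Function.update v t (v t + (T.map fun I => ∏ i ∈ I, v i).sum) := by
  induction T with
  | nil => exact ⟨[], rfl, fun v => by simp [Circuit.eval]⟩
  | cons I T ih =>
    obtain ⟨⟨hcard, htI⟩, hT⟩ := List.forall_mem_cons.1 hT
    obtain ⟨S, hlen, hS⟩ := ih hT
    refine ⟨⟨I, t, hcard, htI⟩ :: S, by simp [hlen], fun v => ?_⟩
    have hprod (a : Bool) (J) (hJ : J ∈ T) :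
        ∏ i ∈ J, Function.update v t a i = ∏ i ∈ J, v i :=
      Finset.prod_update_of_notMem (hT J hJ).2 v a
    rw [Circuit.eval_cons, Gate.apply_eq_update, hS, List.map_congr_left (hprod _)]
    simp [add_assoc]

end Evaluation

section Quadratic

/-- `F` is a polynomial of degree at most two over `𝔽₂` in the functions `g i`, written with at
most `c` monomials. Addition and multiplication in `Bool` are XOR and AND, so that adding such a
polynomial to a line of a circuit takes `c` gates. -/
def IsQuadraticIn (g : ι → X → Bool) (c : ℕ) (F : X → Bool) : Prop :=
  ∃ T : List (Finset ι), T.length ≤ c ∧ (∀ I ∈ T, I.card ≤ 2) ∧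
    ∀ x, F x = (T.map fun I => ∏ i ∈ I, g i x).sum

variable {g : ι → X → Bool} {c : ℕ} {F : X → Bool}

theorem IsQuadraticIn.of_embedding {g' : κ → X → Bool} (e : ι ↪ κ) (he : ∀ i, g' (e i) = g i)
    (hF : IsQuadraticIn g c F) : IsQuadraticIn g' c F := by
  obtain ⟨T, hlen, hcard, hT⟩ := hF
  refine ⟨T.map (Finset.map e), by simpa using hlen, by simpa using hcard, fun x => ?_⟩
  simp [hT, he, Function.comp_def]

theorem IsQuadraticIn.of_sum {β : Type*} (J : Finset β) (I : β → Finset ι) (hJ : J.card ≤ c)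
    (hI : ∀ b, (I b).card ≤ 2) (hF : ∀ x, F x = ∑ b ∈ J, ∏ i ∈ I b, g i x) :
    IsQuadraticIn g c F :=
  ⟨J.toList.map I, by simpa using hJ, by simp [hI], fun x => by
    rw [hF, List.map_map, ← Finset.sum_map_toList]; rfl⟩

theorem sum_decide_eq_mul {β : Type*} [Fintype β] [DecidableEq β] (a : β) (h : β → Bool) :
    ∑ b, decide (a = b) * h b = h a := by
  rw [Fintype.sum_eq_single a fun b hb => by simp [hb.symm, Bool.mul_eq_and, Bool.zero_eq_false]]
  simp [Bool.mul_eq_and]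

theorem IsQuadraticIn.of_indicators {β : Type*} [Fintype β] [DecidableEq β] {y : X → β}
    (ind : β → ι) (hind : ∀ b x, g (ind b) x = decide (y x = b)) (h : β → Bool) :
    IsQuadraticIn g (Fintype.card β) fun x => h (y x) := by
  refine .of_sum {b | h b = true} (fun b => {ind b}) (Finset.card_le_univ _) (by simp) fun x => ?_
  rw [Finset.sum_filter, ← sum_decide_eq_mul (y x) h]
  refine Finset.sum_congr rfl fun b _ => ?_
  cases h b <;> simp [hind, Bool.mul_eq_and, Bool.zero_eq_false]

/-- Lupanov's decomposition: fixing `y` and `u`, what remains is the indicator of a set of values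
of `v`, and all such indicators are available. -/
theorem IsQuadraticIn.of_indicators_mul_blocks {α β γ : Type*} [Fintype α] [DecidableEq α]
    [Fintype β] [DecidableEq β] [Finite γ] [DecidableEq γ] {y : X → α} {u : X → β} {v : X → γ}
    (ind : α → ι) (hind : ∀ a x, g (ind a) x = decide (y x = a))
    (block : β × Finset γ → ι)
    (hblock : ∀ p x, g (block p) x = decide (u x = p.1 ∧ v x ∈ p.2))
    (h : α → β → γ → Bool) :
    IsQuadraticIn g (Fintype.card α * Fintype.card β) fun x => h (y x) (u x) (v x) := by
  classical
  refine .of_sum Finset.univ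
    (fun p : α × β => {ind p.1, block (p.2, {d | h p.1 p.2 d = true}.toFinite.toFinset)})
    (by simp) (fun _ => Finset.card_le_two) fun x => ?_
  rw [← sum_decide_eq_mul (y x, u x) fun p : α × β => h p.1 p.2 (v x)]
  refine Finset.sum_congr rfl fun p _ => ?_
  rw [prod_bool_pair, hind, hblock]
  simp [Prod.ext_iff, Bool.mul_eq_and, Bool.decide_and, Bool.and_assoc]

end Quadratic

section Computes

variable {start : X → Fin N → Bool} {g : ι → X → Bool} {l w c : ℕ}

/-- The functions `g i` are computed by a circuit with at most `l` gates, started in the states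
`start x`: at the end distinct lines hold the values `g i x`, and `w` further lines hold `0`.
The embedding of `ι ⊕ Fin w` says where these values are found. -/
def Computes (start : X → Fin N → Bool) (l w : ℕ) (g : ι → X → Bool) : Prop :=
  ∃ (S : Circuit N) (ρ : ι ⊕ Fin w ↪ Fin N), S.length ≤ l ∧
    ∀ x a, S.eval (start x) (ρ a) = Sum.elim (g · x) 0 a

theorem Computes.of_embedding {g' : κ → X → Bool} (hg : Computes start l w g) (e : κ ↪ ι)
    (he : ∀ k, g (e k) = g' k) : Computes start l w g' := by
  obtain ⟨S, ρ, hlen, hS⟩ := hg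
  refine ⟨S, (e.sumMap (.refl _)).trans ρ, hlen, fun x a => ?_⟩
  cases a <;> simp [hS, he]

theorem Computes.mono {l' w' : ℕ} (hg : Computes start l w g) (hl : l ≤ l') (hw : w' ≤ w) :
    Computes start l' w' g := by
  obtain ⟨S, ρ, hlen, hS⟩ := hg
  refine ⟨S, ((Function.Embedding.refl ι).sumMap (Fin.castLEEmb hw)).trans ρ, hlen.trans hl,
    fun x a => ?_⟩
  cases a <;> simp [hS]

theorem Computes.sumElim_single {F : X → Bool} (hg : Computes start l (w + 1) g)
    (hF : IsQuadraticIn g c F) :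
    Computes start (l + c) w (Sum.elim g fun _ : Fin 1 => F) := by
  obtain ⟨S, ρ, hlen, hS⟩ := hg
  obtain ⟨T, hTlen, hcard, hT⟩ := hF
  let t : Fin N := ρ (.inr 0)
  let line : ι ↪ Fin N := .trans .inl ρ
  obtain ⟨S', hlen', hS'⟩ := exists_circuit_eval_eq_update t (T.map (Finset.map line)) (by
    simpa [t, line] using hcard)
  let slot : (ι ⊕ Fin 1) ⊕ Fin w → ι ⊕ Fin (w + 1) :=
    Sum.elim (Sum.map id fun _ => 0) (.inr ∘ Fin.succ)
  have hslot : Function.Injective slot := by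
    rintro ((i | _) | z) ((j | _) | z') h <;> simp_all [slot, Fin.ext_iff]
  refine ⟨S ++ S', .trans ⟨slot, hslot⟩ ρ, ?_, fun x a => ?_⟩
  · simpa [hlen'] using add_le_add hlen hTlen
  have hsum : ((T.map (Finset.map line)).map fun I => ∏ i ∈ I, S.eval (start x) i).sum = F x := by
    simp [hT, Function.comp_def, line, hS]
  rw [Circuit.eval_append, hS', hsum]
  rcases a with (i | _) | z
  · simp [slot, t, hS]
  · change Function.update (S.eval (start x)) t _ t = F x
    simp [t, hS]
  · simp [slot, t, hS]

theorem Computes.sumElim_fin {d : ℕ} {h : Fin d → X → Bool} (hg : Computes start l (d + w) g)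
    (hh : ∀ k, IsQuadraticIn g c (h k)) : Computes start (l + d * c) w (Sum.elim g h) := by
  induction d generalizing w with
  | zero =>
    exact (hg.mono (by simp) (by simp)).of_embedding (Equiv.sumEmpty ι _).toEmbedding (by simp)
  | succ d ih =>
    have hprevious : Computes start (l + d * c) (w + 1) (Sum.elim g fun k => h (Fin.castSucc k)) :=
      ih (hg.mono le_rfl (by omega)) fun k => hh _
    have hlast : IsQuadraticIn (Sum.elim g fun k => h (Fin.castSucc k)) c (h (Fin.last d)) :=
      (hh _).of_embedding .inl fun _ => rfl
    refine ((hprevious.sumElim_single hlast).mono (by rw [add_mul]; omega) le_rfl).of_embedding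
      (((Equiv.refl ι).sumCongr finSumFinEquiv.symm).trans (Equiv.sumAssoc ..).symm).toEmbedding ?_
    rintro (i | k)
    · rfl
    · refine Fin.lastCases ?_ (fun k => ?_) k <;> simp

theorem Computes.sumElim [Fintype κ] {h : κ → X → Bool}
    (hg : Computes start l (Fintype.card κ + w) g) (hh : ∀ k, IsQuadraticIn g c (h k)) :
    Computes start (l + Fintype.card κ * c) w (Sum.elim g h) := by
  let e := Fintype.equivFin κ
  refine (hg.sumElim_fin fun k => hh (e.symm k)).of_embedding
    ((Equiv.refl ι).sumCongr e).toEmbedding ?_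
  rintro (i | k) <;> simp

theorem decide_eq_eq_head_mul_tail {m : ℕ} (y p : Fin (m + 1) → Bool) :
    decide (y = p) = (y 0 == p 0) * decide (Fin.tail y = Fin.tail p) := by
  have hiff : y = p ↔ y 0 = p 0 ∧ Fin.tail y = Fin.tail p := by
    refine ⟨by rintro rfl; exact ⟨rfl, rfl⟩, fun ⟨hhead, htail⟩ => ?_⟩
    rw [← Fin.cons_self_tail y, hhead, htail, Fin.cons_self_tail]
  simp [hiff, Bool.mul_eq_and, Bool.beq_eq_decide_eq]

theorem IsQuadraticIn.minterm_succ {m : ℕ} {y : X → Fin (m + 1) → Bool} (coord : ι)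
    (hcoord : ∀ x, g coord x = y x 0) (ind : (Fin m → Bool) → ι)
    (hind : ∀ p x, g (ind p) x = decide (Fin.tail (y x) = p)) (p : Fin (m + 1) → Bool) :
    IsQuadraticIn g 2 fun x => decide (y x = p) := by
  classical
  let a := ind (Fin.tail p)
  cases hp : p 0 with
  | true =>
    refine ⟨[{coord, a}], by simp, by simp [Finset.card_le_two], fun x => ?_⟩
    simp [decide_eq_eq_head_mul_tail, hp, prod_bool_pair, a, hcoord, hind]
  | false =>
    refine ⟨[{a}, {coord, a}], by simp, by simp [Finset.card_le_two], fun x => ?_⟩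
    simp only [decide_eq_eq_head_mul_tail, hp, List.map_cons, List.map_nil, List.sum_cons,
      List.sum_nil, add_zero, Finset.prod_singleton, prod_bool_pair, a, hcoord, hind]
    cases y x 0 <;> simp [Bool.mul_eq_and, Bool.add_eq_xor]

theorem Computes.minterms {m : ℕ} {y : X → Fin m → Bool} (coord : Fin m → ι)
    (hcoord : ∀ i x, g (coord i) x = y x i) (hg : Computes start l (2 ^ (m + 1) + w) g) :
    Computes start (l + 2 ^ (m + 1) * 2) w
      (Sum.elim g fun (p : Fin m → Bool) x => decide (y x = p)) := by
  induction m generalizing w with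
  | zero =>
    have hone (p : Fin 0 → Bool) : IsQuadraticIn g 2 fun x => decide (y x = p) :=
      ⟨[∅], by simp, by simp, fun x => by simp [Subsingleton.elim (y x) p, Bool.one_eq_true]⟩
    exact ((hg.mono le_rfl (by simp)).sumElim hone).mono (by simp) le_rfl
  | succ m ih =>
    have htail := ih (y := fun x => Fin.tail (y x)) (w := 2 ^ (m + 1) + w)
      (fun i => coord i.succ) (fun i x => hcoord _ x)
      (hg.mono le_rfl (by rw [pow_succ _ (m + 1)]; omega))
    have hall := (htail.mono le_rfl (by simp)).sumElim (w := w)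
      (IsQuadraticIn.minterm_succ (.inl (coord 0)) (hcoord _) .inr fun _ _ => rfl)
    have hlen : l + 2 ^ (m + 1) * 2 + Fintype.card (Fin (m + 1) → Bool) * 2 ≤
        l + 2 ^ (m + 1 + 1) * 2 := by
      rw [Fintype.card_fun, Fintype.card_bool, Fintype.card_fin, pow_succ _ (m + 1)]
      omega
    refine (hall.mono hlen le_rfl).of_embedding
      (Function.Embedding.inl.sumMap (.refl _)) ?_
    rintro (i | p) <;> rfl

end Computes

section Synthesis

variable {n q m k : ℕ}

theorem computes_pad : Computes (pad : (Fin n → Bool) → Fin (n + q) → Bool) 0 q fun i x => x i := by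
  refine ⟨[], finSumFinEquiv.toEmbedding, le_rfl, fun x a => ?_⟩
  rcases a with i | z
  · simp [Circuit.eval, pad]
  · simp [Circuit.eval, pad, Bool.zero_eq_false]

theorem Computes.exists_implements {l w : ℕ} {f : (Fin n → Bool) → Fin m → Bool}
    (hf : Computes (pad (q := q)) l w fun j x => f x j) :
    ∃ S : Circuit (n + q), Implements S f ∧ S.length ≤ l := by
  obtain ⟨S, ρ, hlen, hS⟩ := hf
  let out : Fin m ↪ Fin (n + q) := .trans .inl ρ
  have hm : m ≤ n + q := by simpa using Fintype.card_le_of_embedding out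
  obtain ⟨π, hπ⟩ := Equiv.Perm.exists_extending_pair (Fin.castLE hm) out
    (Fin.castLE_injective hm) out.injective
  exact ⟨S, ⟨hm, π, fun x j _ => (congrArg _ (hπ j)).trans (hS x (.inl j))⟩, hlen⟩

theorem exists_implements_lupanov {r s d : ℕ} (hd : 2 ^ m ≤ d * s)
    (hq : 2 ^ (m + 1) + 2 ^ (k + 1) + d * 2 ^ s + r ≤ q)
    (f : (Fin (m + k) → Bool) → Fin r → Bool) :
    ∃ S : Circuit (m + k + q), Implements S f ∧
      S.length ≤ 2 ^ (m + 1) * 2 + 2 ^ (k + 1) * 2 + d * 2 ^ s * 2 ^ m + r * (2 ^ k * d) := by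
  let y (x : Fin (m + k) → Bool) : Fin m → Bool := fun i => x (Fin.castAdd k i)
  let z (x : Fin (m + k) → Bool) : Fin k → Bool := fun i => x (Fin.natAdd m i)
  obtain ⟨e⟩ : Nonempty ((Fin m → Bool) ↪ Fin d × Fin s) :=
    Function.Embedding.nonempty_of_card_le (by simpa using hd)
  let block (p : Fin d × Finset (Fin s)) (x : Fin (m + k) → Bool) : Bool :=
    decide ((e (y x)).1 = p.1 ∧ (e (y x)).2 ∈ p.2)
  have hmintermsY := (computes_pad.mono le_rfl (by simpa only [add_assoc] using hq)).minterms
    (y := y) (Fin.castAdd k) fun _ _ => rfl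
  have hmintermsZ := hmintermsY.minterms (y := z) (fun i => .inl (Fin.natAdd m i)) fun _ _ => rfl
  have hblock := (hmintermsZ.mono le_rfl (by simp)).sumElim (h := block) (w := r) fun p =>
    .of_indicators (fun a => .inl (.inr a)) (fun _ _ => rfl)
      fun a => decide ((e a).1 = p.1 ∧ (e a).2 ∈ p.2)
  have hf (x : Fin (m + k) → Bool) :
      f x = f (Fin.append (Function.invFun e ((e (y x)).1, (e (y x)).2)) (z x)) := by
    rw [Function.leftInverse_invFun e.injective, Fin.append_castAdd_natAdd]
  have hout := (hblock.mono le_rfl (by simp)).sumElim (κ := Fin r) (w := 0) fun j =>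
    .of_indicators_mul_blocks (fun a => .inl (.inr a)) (fun _ _ => rfl) .inr (fun _ _ => rfl)
      fun a b c => f (Fin.append (Function.invFun e (b, c)) a) j
  refine ((hout.mono (by simp) le_rfl).of_embedding .inr fun j => ?_).exists_implements
  funext x
  rw [hf]
  rfl

theorem exists_le_mul_le_two_mul {a s : ℕ} (hs : 0 < s) (hsa : s ≤ a) :
    ∃ d, a ≤ d * s ∧ d * s ≤ 2 * a := by
  refine ⟨a / s + 1, ?_, ?_⟩ <;> rw [add_mul, one_mul]
  · exact (Nat.lt_div_mul_add hs).le
  · linarith [Nat.div_mul_le_self a s]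

theorem exists_implements_length_le {s K : ℕ} (hs : 0 < s) (hsm : s ≤ 2 ^ m)
    (hmn : 2 * m + s ≤ n) (hK : n ≤ K * s) (hq : 2 ^ (n - m + 3) ≤ q)
    (f : (Fin n → Bool) → Fin n → Bool) :
    ∃ S : Circuit (n + q), Implements S f ∧ S.length ≤ (10 + 2 * K) * 2 ^ n := by
  obtain ⟨k, rfl⟩ : ∃ k, n = m + k := ⟨n - m, by omega⟩
  rw [Nat.add_sub_cancel_left, pow_add] at hq
  obtain ⟨d, hd, hds⟩ := exists_le_mul_le_two_mul hs hsm
  have hpow : 2 ^ m * 2 ^ s ≤ 2 ^ k := by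
    rw [← pow_add]
    exact Nat.pow_le_pow_right two_pos (by omega)
  have hblocks : d * 2 ^ s ≤ 2 * 2 ^ k :=
    calc d * 2 ^ s ≤ d * s * 2 ^ s := Nat.mul_le_mul_right _ (Nat.le_mul_of_pos_right _ hs)
      _ ≤ 2 * 2 ^ m * 2 ^ s := Nat.mul_le_mul_right _ hds
      _ ≤ 2 * 2 ^ k := by rw [mul_assoc]; exact Nat.mul_le_mul_left _ hpow
  have hm : 2 ^ (m + 1) ≤ 2 ^ k := Nat.pow_le_pow_right two_pos (by omega)
  have hk : k < 2 ^ k := Nat.lt_two_pow_self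
  obtain ⟨S, hS, hlen⟩ := exists_implements_lupanov (q := q) hd (by rw [pow_succ 2 k]; omega) f
  refine ⟨S, hS, hlen.trans ?_⟩
  have hminterms : 2 ^ (m + 1) * 2 + 2 ^ (k + 1) * 2 ≤ 8 * (2 ^ m * 2 ^ k) := by
    have h₁ : 2 ^ m ≤ 2 ^ m * 2 ^ k := Nat.le_mul_of_pos_right _ (by positivity)
    have h₂ : 2 ^ k ≤ 2 ^ m * 2 ^ k := Nat.le_mul_of_pos_left _ (by positivity)
    omega
  have hout : (m + k) * (2 ^ k * d) ≤ 2 * K * (2 ^ m * 2 ^ k) :=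
    calc (m + k) * (2 ^ k * d) ≤ K * s * (2 ^ k * d) := Nat.mul_le_mul_right _ hK
      _ = K * 2 ^ k * (d * s) := by ring
      _ ≤ K * 2 ^ k * (2 * 2 ^ m) := Nat.mul_le_mul_left _ hds
      _ = 2 * K * (2 ^ m * 2 ^ k) := by ring
  calc _ ≤ 8 * (2 ^ m * 2 ^ k) + 2 * 2 ^ k * 2 ^ m + 2 * K * (2 ^ m * 2 ^ k) := by gcongr
    _ = (10 + 2 * K) * 2 ^ (m + k) := by ring

end Synthesis

section Counting

theorem card_finset_card_le_two [Fintype ι] :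
    Nat.card {I : Finset ι // I.card ≤ 2} ≤ (Fintype.card ι + 1) ^ 2 := by
  classical
  have hsub : ({I | I.card ≤ 2} : Finset (Finset ι)) ⊆
      (Finset.range 3).biUnion fun i => Finset.powersetCard i Finset.univ := by
    intro I hI
    simpa [Finset.mem_powersetCard, Nat.lt_succ_iff] using hI
  calc Nat.card {I : Finset ι // I.card ≤ 2}
      = ({I | I.card ≤ 2} : Finset (Finset ι)).card := by
        rw [Nat.card_eq_fintype_card, Fintype.card_subtype]
    _ ≤ ∑ i ∈ Finset.range 3, (Fintype.card ι).choose i := by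
        simpa using (Finset.card_le_card hsub).trans Finset.card_biUnion_le
    _ ≤ ∑ i ∈ Finset.range 3, Fintype.card ι ^ i :=
        Finset.sum_le_sum fun i _ => Nat.choose_le_pow _ i
    _ ≤ (Fintype.card ι + 1) ^ 2 := by
        simp only [Finset.sum_range_succ, Finset.sum_range_zero]
        linarith [add_sq (Fintype.card ι) 1]

theorem Gate.injective_controls_target :
    Function.Injective fun g : Gate N =>
      ((⟨g.I, g.card_le⟩, g.t) : {I : Finset (Fin N) // I.card ≤ 2} × Fin N) := by
  rintro ⟨I, t, _, _⟩ ⟨J, u, _, _⟩ h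
  simp_all

instance : Finite (Gate N) := Finite.of_injective _ Gate.injective_controls_target

theorem Gate.card_add_one_le : Nat.card (Gate N) + 1 ≤ (N + 1) ^ 3 := by
  have hgates : Nat.card (Gate N) ≤ (N + 1) ^ 2 * N :=
    calc Nat.card (Gate N) ≤ Nat.card ({I : Finset (Fin N) // I.card ≤ 2} × Fin N) :=
        Nat.card_le_card_of_injective _ Gate.injective_controls_target
      _ ≤ (N + 1) ^ 2 * N := by
        rw [Nat.card_prod, Nat.card_fin]
        gcongr
        simpa using card_finset_card_le_two (ι := Fin N)
  calc Nat.card (Gate N) + 1 ≤ (N + 1) ^ 2 * N + (N + 1) ^ 2 :=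
        add_le_add hgates (Nat.one_le_pow _ _ N.succ_pos)
    _ = (N + 1) ^ 3 := by ring

theorem two_pow_le_of_forall_exists_implements {n q m l : ℕ}
    (h : ∀ f : (Fin n → Bool) → Fin m → Bool,
      ∃ S : Circuit (n + q), Implements S f ∧ S.length ≤ l) :
    2 ^ (m * 2 ^ n) ≤ (n + q + 1) ^ (3 * l + m) := by
  let decode (p : List.Vector (Option (Gate (n + q))) l × (Fin m → Fin (n + q)))
      (x : Fin n → Bool) (j : Fin m) : Bool :=
    Circuit.eval p.1.toList.reduceOption (pad x) (p.2 j)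
  have hdecode : Function.Surjective decode := by
    intro f
    obtain ⟨S, ⟨hm, π, hπ⟩, hlen⟩ := h f
    refine ⟨(⟨S.map some ++ .replicate (l - S.length) none, by simp [hlen]⟩,
      fun j => π ⟨j, j.2.trans_le hm⟩), ?_⟩
    funext x j
    simpa [decode, List.reduceOption_append, List.reduceOption, List.filterMap_map] using
      hπ x j (j.2.trans_le hm)
  have : Fintype (Gate (n + q)) := Fintype.ofFinite _
  calc 2 ^ (m * 2 ^ n) = Fintype.card ((Fin n → Bool) → Fin m → Bool) := by simp [pow_mul]
    _ ≤ (Nat.card (Gate (n + q)) + 1) ^ l * (n + q) ^ m := by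
      simpa using Fintype.card_le_of_surjective decode hdecode
    _ ≤ ((n + q + 1) ^ 3) ^ l * (n + q + 1) ^ m :=
      Nat.mul_le_mul (Nat.pow_le_pow_left Gate.card_add_one_le _)
        (Nat.pow_le_pow_left (Nat.le_succ _) _)
    _ = (n + q + 1) ^ (3 * l + m) := by rw [← pow_mul, pow_add]

theorem two_pow_le_mul_of_forall_exists_implements {n q l a : ℕ} (hn : 0 < n)
    (hq : n + q + 1 ≤ 2 ^ (a * n))
    (h : ∀ f : (Fin n → Bool) → Fin n → Bool,
      ∃ S : Circuit (n + q), Implements S f ∧ S.length ≤ l) :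
    2 ^ n ≤ a * (3 * l + n) := by
  have hcount : 2 ^ (n * 2 ^ n) ≤ 2 ^ (n * (a * (3 * l + n))) :=
    calc 2 ^ (n * 2 ^ n) ≤ (n + q + 1) ^ (3 * l + n) := two_pow_le_of_forall_exists_implements h
      _ ≤ (2 ^ (a * n)) ^ (3 * l + n) := Nat.pow_le_pow_left hq _
      _ = 2 ^ (n * (a * (3 * l + n))) := by rw [← pow_mul]; ring_nf
  exact Nat.le_of_mul_le_mul_left ((Nat.pow_le_pow_iff_right one_lt_two).1 hcount) hn

end Counting

section Shannon

variable {n q : ℕ}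

theorem Lsh_le_s2 {B : ℕ}
    (h : ∀ f : (Fin n → Bool) → Fin n → Bool,
      ∃ S : Circuit (n + q), Implements S f ∧ S.length ≤ B) : Lsh n q ≤ B := by
  refine csSup_le' ?_
  rintro _ ⟨f, -, rfl⟩
  obtain ⟨S, hS, hlen⟩ := h f
  have hmin : Lmin n q f ≤ S.L := Nat.sInf_le ⟨S, hS, rfl⟩
  exact hmin.trans hlen

theorem exists_implements_length_le_Lsh {f : (Fin n → Bool) → Fin n → Bool}
    (hf : Implementable n q f) :
    ∃ S : Circuit (n + q), Implements S f ∧ S.length ≤ Lsh n q := by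
  have hbdd : BddAbove {l | ∃ f, Implementable n q f ∧ Lmin n q f = l} :=
    ((Set.toFinite {f | Implementable n q f}).image (Lmin n q)).bddAbove
  have hne : {l | ∃ S : Circuit (n + q), Implements S f ∧ S.L = l}.Nonempty :=
    hf.imp' _ fun S hS => ⟨S, hS, rfl⟩
  obtain ⟨S, hS, hL⟩ := Nat.sInf_mem hne
  exact ⟨S, hS, hL.trans_le (le_csSup hbdd ⟨f, hf, rfl⟩)⟩

theorem two_pow_le_mul_Lsh (hn : 0 < n) (hn' : 4 * n ≤ 2 ^ n) (hq : n + q + 1 ≤ 2 ^ (2 * n))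
    (hF : ∀ f, Implementable n q f) : 2 ^ n ≤ 12 * Lsh n q := by
  have := two_pow_le_mul_of_forall_exists_implements hn hq fun f =>
    exists_implements_length_le_Lsh (hF f)
  omega

theorem two_pow_le_mul_Lsh_and_Lsh_le {m K : ℕ} (hn : 8 ≤ n) (hm : n ≤ 2 ^ m)
    (hK : n ≤ K * (n - 2 * m)) (hq : 2 ^ (n - m + 3) ≤ q) (hq' : q ≤ n * 2 ^ n) :
    2 ^ n ≤ 12 * Lsh n q ∧ Lsh n q ≤ (10 + 2 * K) * 2 ^ n := by
  have hs : 0 < n - 2 * m := Nat.pos_of_ne_zero fun h => by rw [h, mul_zero] at hK; omega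
  have himp := exists_implements_length_le hs ((Nat.sub_le _ _).trans hm) (by omega) hK hq
  have hpow : 4 * n ≤ 2 ^ n := by
    clear * - hn
    induction n, hn using Nat.le_induction with
    | base => norm_num
    | succ n _ ih => rw [pow_succ]; omega
  have hlines : n + q + 1 ≤ 2 ^ (2 * n) :=
    calc n + q + 1 ≤ 2 ^ n + n * 2 ^ n := by omega
      _ = (n + 1) * 2 ^ n := by ring
      _ ≤ 2 ^ n * 2 ^ n := Nat.mul_le_mul_right _ Nat.lt_two_pow_self
      _ = 2 ^ (2 * n) := by rw [two_mul, pow_add]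
  exact ⟨two_pow_le_mul_Lsh (by omega) hpow hlines fun f => (himp f).imp fun _ hS => hS.1,
    Lsh_le_s2 himp⟩

end Shannon

section Asymptotics

variable {φ : ℕ → ℝ} {n : ℕ} {r : ℝ}

theorem asympEquiv_natCeil {u : ℕ → ℝ} (hu : Tendsto u atTop atTop) :
    AsympEquiv (fun n => (⌈u n⌉₊ : ℝ)) u :=
  tendsto_nat_ceil_div_atTop.comp hu

theorem pow2e_le_two_pow (hφ : 0 ≤ φ n) : pow2e φ n ≤ 2 ^ n := by
  have : (0 : ℤ) ≤ ⌈(n : ℝ) / φ n⌉ := Int.ceil_nonneg (by positivity)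
  rw [pow2e, ← zpow_natCast]
  exact zpow_le_zpow_right₀ one_le_two (by omega)

theorem two_pow_sub_natCeil_le_pow2e (hr : 1 ≤ r) (hφ : r ≤ φ n) :
    (2 : ℝ) ^ (n - ⌈(n : ℝ) / r⌉₊) ≤ pow2e φ n := by
  have hle : ⌈(n : ℝ) / φ n⌉ ≤ (⌈(n : ℝ) / r⌉₊ : ℤ) := by
    rw [Int.ceil_le]
    calc (n : ℝ) / φ n ≤ n / r := by gcongr
      _ ≤ _ := mod_cast Nat.le_ceil _
  have hn : ⌈(n : ℝ) / r⌉₊ ≤ n := Nat.ceil_le.2 (div_le_self n.cast_nonneg hr)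
  rw [pow2e, ← zpow_natCast]
  exact zpow_le_zpow_right₀ one_le_two (by omega)

theorem tendsto_natCast_mul_pow2e (hr : 1 ≤ r) (hφ : ∀ᶠ n in atTop, r ≤ φ n) :
    Tendsto (fun n : ℕ => n * pow2e φ n) atTop atTop := by
  refine tendsto_atTop_mono' _ ?_ tendsto_natCast_atTop_atTop
  filter_upwards [hφ] with n hn
  exact le_mul_of_one_le_right n.cast_nonneg <|
    (one_le_pow₀ one_le_two).trans (two_pow_sub_natCeil_le_pow2e hr hn)

theorem eventually_natCast_le_two_pow_natCeil_div (hr : 0 < r) :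
    ∀ᶠ n : ℕ in atTop, n ≤ 2 ^ ⌈(n : ℝ) / r⌉₊ := by
  have hbase : 1 < (2 : ℝ) ^ r⁻¹ := Real.one_lt_rpow one_lt_two (inv_pos.2 hr)
  have hlim := tendsto_pow_const_div_const_pow_of_one_lt 1 hbase
  filter_upwards [hlim.eventually_le_const one_pos] with n hn
  have hreal : (n : ℝ) ≤ 2 ^ ⌈(n : ℝ) / r⌉₊ :=
    calc (n : ℝ) ≤ ((2 : ℝ) ^ r⁻¹) ^ n := by
          simpa using (div_le_one (by positivity)).1 hn
      _ = (2 : ℝ) ^ ((n : ℝ) / r) := by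
          rw [← Real.rpow_mul_natCast two_pos.le, inv_mul_eq_div]
      _ ≤ (2 : ℝ) ^ ⌈(n : ℝ) / r⌉₊ := by
          rw [← Real.rpow_natCast]
          exact Real.rpow_le_rpow_of_exponent_le one_le_two (Nat.le_ceil _)
  exact_mod_cast hreal

theorem exists_eventually_le_mul_sub_two_mul_natCeil (hr : 2 < r) :
    ∃ K : ℕ, ∀ᶠ n : ℕ in atTop, n ≤ K * (n - 2 * ⌈(n : ℝ) / r⌉₊) := by
  have hδ : 0 < 1 - 2 / r := sub_pos.2 ((div_lt_one (by linarith)).2 hr)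
  obtain ⟨K, hK⟩ := exists_nat_gt (2 / (1 - 2 / r))
  refine ⟨K, ?_⟩
  filter_upwards [eventually_ge_atTop ⌈4 / (1 - 2 / r)⌉₊] with n hn
  have hceil : (⌈(n : ℝ) / r⌉₊ : ℝ) < n / r + 1 := Nat.ceil_lt_add_one (by positivity)
  have hn' : 4 ≤ n * (1 - 2 / r) := (div_le_iff₀ hδ).1 (Nat.ceil_le.1 hn)
  have hK' : 2 ≤ K * (1 - 2 / r) := ((div_lt_iff₀ hδ).1 hK).le
  have hhalf : (n : ℝ) * (1 - 2 / r) / 2 ≤ (n - 2 * ⌈(n : ℝ) / r⌉₊ : ℕ) :=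
    calc (n : ℝ) * (1 - 2 / r) / 2 ≤ n * (1 - 2 / r) - 2 := by linarith
      _ = n - 2 * (n / r + 1) := by ring
      _ ≤ n - (2 * ⌈(n : ℝ) / r⌉₊ : ℕ) := by push_cast; linarith
      _ ≤ (n - 2 * ⌈(n : ℝ) / r⌉₊ : ℕ) := tsub_le_iff_right.2 (mod_cast le_tsub_add)
  have hreal : (n : ℝ) ≤ K * (n - 2 * ⌈(n : ℝ) / r⌉₊ : ℕ) :=
    calc (n : ℝ) = 2 * (n / 2) := by ring
      _ ≤ K * (1 - 2 / r) * (n / 2) := by gcongr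
      _ = K * (n * (1 - 2 / r) / 2) := by ring
      _ ≤ _ := by gcongr
  exact_mod_cast hreal

theorem natCeil_natCast_mul_pow2e_le (hφ : 0 ≤ φ n) : ⌈n * pow2e φ n⌉₊ ≤ n * 2 ^ n := by
  rw [Nat.ceil_le]
  push_cast
  gcongr
  exact pow2e_le_two_pow hφ

theorem two_pow_sub_natCeil_add_three_le (hn : 8 ≤ n) (hr : 1 ≤ r) (hφ : r ≤ φ n) :
    2 ^ (n - ⌈(n : ℝ) / r⌉₊ + 3) ≤ ⌈n * pow2e φ n⌉₊ := by
  have hreal : (2 : ℝ) ^ (n - ⌈(n : ℝ) / r⌉₊ + 3) ≤ n * pow2e φ n :=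
    calc (2 : ℝ) ^ (n - ⌈(n : ℝ) / r⌉₊ + 3) = 8 * 2 ^ (n - ⌈(n : ℝ) / r⌉₊) := by ring
      _ ≤ n * pow2e φ n := mul_le_mul (mod_cast hn) (two_pow_sub_natCeil_le_pow2e hr hφ)
        (by positivity) n.cast_nonneg
  exact_mod_cast hreal.trans (Nat.le_ceil _)

end Asymptotics

theorem complexity_order_with_memory_general (φ : ℕ → ℝ) {r : ℝ} (hr : 2 < r)
    (hφ : ∀ᶠ n in atTop, r ≤ φ n) :
    ∃ q₀ : ℕ → ℕ,
      AsympEquiv (fun n => (q₀ n : ℝ)) (fun n => (n : ℝ) * pow2e φ n) ∧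
      ∃ (c C : ℝ) (N : ℕ), 0 < c ∧ c ≤ C ∧ ∀ n ≥ N,
        c * (2 : ℝ) ^ n ≤ (Lsh n (q₀ n) : ℝ) ∧
        (Lsh n (q₀ n) : ℝ) ≤ C * (2 : ℝ) ^ n := by
  have hr₁ : 1 ≤ r := by linarith
  obtain ⟨K, hK⟩ := exists_eventually_le_mul_sub_two_mul_natCeil hr
  obtain ⟨N, hN⟩ := eventually_atTop.1 <| (eventually_ge_atTop 8).and <| hφ.and <|
    hK.and (eventually_natCast_le_two_pow_natCeil_div (zero_lt_one.trans_le hr₁))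
  refine ⟨fun n => ⌈n * pow2e φ n⌉₊, asympEquiv_natCeil (tendsto_natCast_mul_pow2e hr₁ hφ),
    1 / 12, 10 + 2 * K, N, by norm_num, by linarith [K.cast_nonneg (α := ℝ)], fun n hn => ?_⟩
  obtain ⟨hn₈, hφn, hKn, hpow⟩ := hN n hn
  obtain ⟨hlower, hupper⟩ := two_pow_le_mul_Lsh_and_Lsh_le hn₈ hpow hKn
    (two_pow_sub_natCeil_add_three_le hn₈ hr₁ hφn)
    (natCeil_natCast_mul_pow2e_le (by linarith : 0 ≤ φ n))
  have hlower' : (2 : ℝ) ^ n ≤ 12 * Lsh n ⌈n * pow2e φ n⌉₊ := mod_cast hlower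
  exact ⟨by linarith, mod_cast hupper⟩

/-- For any growing functions `ψ` and `φ` with `φ(n) ≤ n / (log₂ n + log₂ ψ(n))` for
all sufficiently large `n`, there is a sequence `q₀(n) ~ n · 2^{n - ⌈n/φ(n)⌉}` with
`L(n, q₀(n)) ≍ 2ⁿ`. -/
theorem complexity_order_with_memory (ψ φ : ℕ → ℝ) (hψ : Growing ψ) (hφ : Growing φ)
    (hφψ : ∀ᶠ n in atTop, φ n ≤ (n : ℝ) / (Real.logb 2 n + Real.logb 2 (ψ n))) :
    ∃ q₀ : ℕ → ℕ,
      AsympEquiv (fun n => (q₀ n : ℝ)) (fun n => (n : ℝ) * pow2e φ n) ∧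
      ∃ (c C : ℝ) (N : ℕ), 0 < c ∧ c ≤ C ∧ ∀ n ≥ N,
        c * (2 : ℝ) ^ n ≤ (Lsh n (q₀ n) : ℝ) ∧
        (Lsh n (q₀ n) : ℝ) ≤ C * (2 : ℝ) ^ n :=
  complexity_order_with_memory_general φ (by norm_num : (2 : ℝ) < 3) (hφ.2.eventually_ge_atTop 3)

end Rev
end
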